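/- Let A = (Σ, Q, q0, δ, F) be an alternating safety automaton and M ⊆ Q an over-approximation of the set of states that are existentially in conflict for p ∈ Σ (i.e., every state existentially in conflict with some other state for p lies in M). Then the alternating safety automaton A' = (Σ, Q', q0', δ', Q') with Q' = 2^M ∪ (Q∖M), q0' = {q0} if q0 ∈ M and q0' = q0 otherwise, δ'(q) = ⋁_{X'⊆M} (X' ∧ δ(q)[X'↦1, M∖X'↦0]) for q ∈ Q∖M, and δ'(X) = ⋁_{X'⊆M} (X' ∧ ⋀_{q∈X} δ(q)[X'↦1, M∖X'↦0]) for X ⊆ M, has at most 2^{|M|} + |Q∖M| states, satisfies L(A') = L(A), and is in existential normal form for p. -/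

import Mathlib

/-!
A safety automaton accepts `w` exactly when there are sets `R i` of states, with the initial
state in `R 0`, such that every `q ∈ R i` has its transition formula satisfied by `R (i + 1)`
together with the literals true in `w i` (`mem_lang_iff`). Everything is done with such *traces*
instead of run trees.

*Language equality* holds for every `M`: a trace of `A` yields one of the compiled automaton by
taking all macro-states contained in `R i`; conversely, macro-states are flattened into their
members (`exCompile_lang`).

*Normal form.* The inclusion needing the hypothesis on `M` starts from a trace `R'` of the
state-wise quantification on a word `w` without `p`. Each element `s ∈ R' i` has chosen a value
`b` for `p` and a successor macro-state. Following the successor macro-states from the initial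
state gives a main chain `c 0, c 1, …` in `R'`. Each flattened state `q` at time `i` is assigned
one element of `R' i` it comes from, namely `c i` whenever `q` belongs to `c i`, and then a minimal
satisfying assignment below the choice of that element. These assignments define an existential
unfolding `U` of `A`. If both `p` and `¬p` occurred in `U` at time `i + 1`, then all ancestors of
the two occurrences would be pairwise in conflict, hence lie in `M`; inductively from the root they
would belong to the main chain, so the two parents at time `i` would both belong to `c i`, which
fixed a single value of `p`: a contradiction. So `U` prescribes a consistent value of `p` at each
time, which extends `w` to a word accepted by `A`, hence by the compiled automaton.
-/

namespace ABAKC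

/-- Positive Boolean formulas over variable type `α` (no negation). -/
inductive PosBool (α : Type) : Type
  | tt : PosBool α
  | ff : PosBool α
  | var : α → PosBool α
  | and : PosBool α → PosBool α → PosBool α
  | or : PosBool α → PosBool α → PosBool α

namespace PosBool

variable {α β : Type}

/-- Satisfaction of a positive Boolean formula by a set of variables. -/
def eval : PosBool α → Set α → Prop
  | .tt, _ => True
  | .ff, _ => False
  | .var a, X => a ∈ X
  | .and f g, X => f.eval X ∧ g.eval X
  | .or f g, X => f.eval X ∨ g.eval X

/-- The minimal satisfying assignments of a positive Boolean formula. -/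
def mSat (B : PosBool α) : Set (Set α) :=
  {X | B.eval X ∧ ∀ Y : Set α, Y ⊂ X → ¬ B.eval Y}

/-- Substitution of formulas for variables. -/
def bind : PosBool α → (α → PosBool β) → PosBool β
  | .tt, _ => .tt
  | .ff, _ => .ff
  | .var a, f => f a
  | .and g h, f => .and (g.bind f) (h.bind f)
  | .or g h, f => .or (g.bind f) (h.bind f)

end PosBool

/-- Finite disjunction. -/
def bigOr {α : Type} : List (PosBool α) → PosBool α
  | [] => .ff
  | b :: l => .or b (bigOr l)

/-- Finite conjunction. -/
def bigAnd {α : Type} : List (PosBool α) → PosBool α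
  | [] => .tt
  | b :: l => .and b (bigAnd l)

/-- Literals over the Boolean variables `V`: `(a, true)` is `a` and `(a, false)` is `¬a`. -/
abbrev Lit (V : Type) := V × Bool

/-- Infinite words over the alphabet `2^V`. -/
abbrev Word (V : Type) := ℕ → Set V

/-- An alternating Büchi automaton over Boolean variables `V` with state set `Q`:
transition formulas are positive Boolean formulas over states and literals. -/
structure ABA (V : Type) (Q : Type) where
  init : Q
  tr : Q → PosBool (Q ⊕ Lit V)
  acc : Set Q

variable {V Q : Type}

/-- A literal holds in a letter `σ ⊆ V`. -/
def litHolds (σ : Set V) (l : Lit V) : Prop := l.1 ∈ σ ↔ l.2 = true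

/-- A run of an alternating automaton on a word: a `(Q ⊕ Lit V)`-labeled tree whose root
is labeled with the initial state, such that the children labels of every state-labeled
node satisfy the state's transition formula, and literal labels are consistent with the word. -/
structure Run (A : ABA V Q) (w : Word V) where
  nodes : Set (List ℕ)
  label : List ℕ → Q ⊕ Lit V
  root_mem : [] ∈ nodes
  prefix_closed : ∀ {m n : List ℕ}, n ∈ nodes → m <+: n → m ∈ nodes
  root_label : label [] = Sum.inl A.init
  step : ∀ n ∈ nodes, ∀ q : Q, label n = Sum.inl q →
    (A.tr q).eval {x | ∃ d : ℕ, n ++ [d] ∈ nodes ∧ label (n ++ [d]) = x}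
  lit_ok : ∀ n ∈ nodes, ∀ l : Lit V, label n = Sum.inr l → litHolds (w (n.length - 1)) l

/-- A run is accepting if every infinite branch visits the acceptance set infinitely often. -/
def Run.Accepting {A : ABA V Q} {w : Word V} (ρ : Run A w) : Prop :=
  ∀ b : ℕ → ℕ, (∀ k : ℕ, (List.ofFn fun i : Fin k => b i) ∈ ρ.nodes) →
    ∀ k : ℕ, ∃ j : ℕ, k ≤ j ∧ ∃ q ∈ A.acc,
      ρ.label (List.ofFn fun i : Fin j => b i) = Sum.inl q

/-- The language of an alternating Büchi automaton. -/
def ABA.lang (A : ABA V Q) : Set (Word V) := {w | ∃ ρ : Run A w, ρ.Accepting}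

/-- A safety automaton: every state is accepting. -/
def ABA.Safety (A : ABA V Q) : Prop := A.acc = Set.univ

/-- Projection of a word onto `Σ ∖ {p}`. -/
def projWord (p : V) (t : Word V) : Word V := fun i => t i \ {p}

/-- The language of the automaton viewed over the alphabet `Σ ∖ {p}`
(words never containing `p`). -/
def ABA.langWithout (A : ABA V Q) (p : V) : Set (Word V) :=
  {w | w ∈ A.lang ∧ ∀ i : ℕ, p ∉ w i}

/-- The existential quantification `∃p.A`: projections onto `Σ ∖ {p}` of words in `L(A)`. -/
def ABA.existsLang (A : ABA V Q) (p : V) : Set (Word V) :=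
  {w | ∃ t ∈ A.lang, projWord p t = w}

/-- The universal quantification `∀p.A`: words over `Σ ∖ {p}` all of whose `p`-extensions
are in `L(A)`. -/
def ABA.forallLang (A : ABA V Q) (p : V) : Set (Word V) :=
  {w | (∀ i : ℕ, p ∉ w i) ∧ ∀ t : Word V, projWord p t = w → t ∈ A.lang}

/-- Substitute the Boolean value `b` for the variable `p` in all `p`-literals of a
transition formula. -/
def substP [DecidableEq V] (p : V) (b : Bool) (B : PosBool (Q ⊕ Lit V)) :
    PosBool (Q ⊕ Lit V) :=
  B.bind fun x =>
    match x with
    | Sum.inl q => PosBool.var (Sum.inl q)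
    | Sum.inr (a, c) =>
        if a = p then (if c = b then PosBool.tt else PosBool.ff)
        else PosBool.var (Sum.inr (a, c))

/-- State-wise existential quantification `∃°p.A`: replace each `δ(q)` by
`δ(q)[p↦1] ∨ δ(q)[p↦0]`. -/
def ABA.sExists [DecidableEq V] (A : ABA V Q) (p : V) : ABA V Q :=
  { A with tr := fun q => PosBool.or (substP p true (A.tr q)) (substP p false (A.tr q)) }

/-- State-wise universal quantification `∀°p.A`: replace each `δ(q)` by
`δ(q)[p↦1] ∧ δ(q)[p↦0]`. -/
def ABA.sForall [DecidableEq V] (A : ABA V Q) (p : V) : ABA V Q :=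
  { A with tr := fun q => PosBool.and (substP p true (A.tr q)) (substP p false (A.tr q)) }

/-- `A` is in existential normal form for `p`: the language of the state-wise existential
quantification (over the alphabet `Σ ∖ {p}`) equals the language of `∃p.A`. -/
def ExistentialNF [DecidableEq V] (A : ABA V Q) (p : V) : Prop :=
  (A.sExists p).langWithout p = A.existsLang p

/-- `A` is in universal normal form for `p`: the language of the state-wise universal
quantification (over the alphabet `Σ ∖ {p}`) equals the language of `∀p.A`. -/
def UniversalNF [DecidableEq V] (A : ABA V Q) (p : V) : Prop :=
  (A.sForall p).langWithout p = A.forallLang p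

/-- Projection of a transition formula to the states (literals replaced by `true`). -/
def projQ (B : PosBool (Q ⊕ Lit V)) : PosBool Q :=
  B.bind fun x =>
    match x with
    | Sum.inl q => PosBool.var q
    | Sum.inr _ => PosBool.tt

/-- A positive Boolean formula over states is (semantically) a disjunction of states. -/
def IsDisjOfStates (B : PosBool Q) : Prop :=
  ∃ S : Set Q, ∀ X : Set Q, B.eval X ↔ ∃ q ∈ S, q ∈ X

/-- A positive Boolean formula over states is (semantically) a conjunction of states. -/
def IsConjOfStates (B : PosBool Q) : Prop :=
  ∃ S : Set Q, ∀ X : Set Q, B.eval X ↔ ∀ q ∈ S, q ∈ X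

/-- `A` is nondeterministic: each transition formula, projected to the states,
is a disjunction of states. -/
def ABA.Nondet (A : ABA V Q) : Prop := ∀ q : Q, IsDisjOfStates (projQ (A.tr q))

/-- `A` is universal: each transition formula, projected to the states,
is a conjunction of states. -/
def ABA.Universal (A : ABA V Q) : Prop := ∀ q : Q, IsConjOfStates (projQ (A.tr q))

/-- `A` is deterministic: both nondeterministic and universal. -/
def ABA.Deterministic (A : ABA V Q) : Prop := A.Nondet ∧ A.Universal

/-- Vertices of unfoldings: states or literals, paired with a timestep. -/
abbrev UVert (V Q : Type) := (Q ⊕ Lit V) × ℕ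

/-- An existential unfolding of `A`: a DAG over `(Q ∪ L_Σ) × ℕ` rooted at `(q0, 0)`,
where every state vertex `(q, i)` has as successor set exactly `X × {i+1}` for one
chosen minimal satisfying assignment `X` of `δ(q)`, and every vertex is reachable
from the root (smallest-sets condition). -/
structure ExUnfolding (A : ABA V Q) where
  verts : Set (UVert V Q)
  edges : Set (UVert V Q × UVert V Q)
  root_mem : (Sum.inl A.init, 0) ∈ verts
  edges_sub : ∀ e ∈ edges, e.1 ∈ verts ∧ e.2 ∈ verts
  edge_shape : ∀ e ∈ edges, (∃ q : Q, e.1.1 = Sum.inl q) ∧ e.2.2 = e.1.2 + 1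
  succ : ∀ q : Q, ∀ i : ℕ, (Sum.inl q, i) ∈ verts →
    ∃ X ∈ (A.tr q).mSat,
      (∀ x ∈ X, (x, i + 1) ∈ verts ∧ ((Sum.inl q, i), (x, i + 1)) ∈ edges) ∧
      (∀ u : UVert V Q, ((Sum.inl q, i), u) ∈ edges → u.2 = i + 1 ∧ u.1 ∈ X)
  minimal : ∀ v ∈ verts,
    Relation.ReflTransGen (fun a b => (a, b) ∈ edges) (Sum.inl A.init, 0) v

/-- Edge relation of an existential unfolding. -/
def ExUnfolding.edgeRel {A : ABA V Q} (U : ExUnfolding A) (a b : UVert V Q) : Prop :=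
  (a, b) ∈ U.edges

/-- The existential syntactic condition for `p`: no existential unfolding contains both
`(p, i)` and `(¬p, i)` for any timestep `i`. -/
def ExSyntacticCond (A : ABA V Q) (p : V) : Prop :=
  ∀ U : ExUnfolding A, ∀ i : ℕ,
    ¬ ((Sum.inr (p, true), i) ∈ U.verts ∧ (Sum.inr (p, false), i) ∈ U.verts)

/-- `X` covers the transition formula `B`: for every minimal satisfying assignment `X'`
of `B`, `X ∩ X' ∩ Q ≠ ∅` and `X' ∩ L_Σ ⊆ X`. -/
def Covers (B : PosBool (Q ⊕ Lit V)) (X : Set (Q ⊕ Lit V)) : Prop :=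
  ∀ X' ∈ B.mSat,
    (∃ s : Q, Sum.inl s ∈ X ∧ Sum.inl s ∈ X') ∧
    ∀ l : Lit V, Sum.inr l ∈ X' → Sum.inr l ∈ X

/-- A minimal covering set. -/
def MinCover (B : PosBool (Q ⊕ Lit V)) (X : Set (Q ⊕ Lit V)) : Prop :=
  Covers B X ∧ ∀ Y : Set (Q ⊕ Lit V), Y ⊂ X → ¬ Covers B Y

/-- A universal unfolding of `A`: a DAG over `(Q ∪ L_Σ) × ℕ` rooted at `(q0, 0)`,
where every state vertex `(q, i)` has as successor set exactly `X × {i+1}` for some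
minimal set `X` that intersects every minimal satisfying assignment of `δ(q)` in a state
and contains all its literals, and every vertex is reachable from the root. -/
structure UnivUnfolding (A : ABA V Q) where
  verts : Set (UVert V Q)
  edges : Set (UVert V Q × UVert V Q)
  root_mem : (Sum.inl A.init, 0) ∈ verts
  edges_sub : ∀ e ∈ edges, e.1 ∈ verts ∧ e.2 ∈ verts
  edge_shape : ∀ e ∈ edges, (∃ q : Q, e.1.1 = Sum.inl q) ∧ e.2.2 = e.1.2 + 1
  succ : ∀ q : Q, ∀ i : ℕ, (Sum.inl q, i) ∈ verts →
    ∃ X : Set (Q ⊕ Lit V), MinCover (A.tr q) X ∧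
      (∀ x ∈ X, (x, i + 1) ∈ verts ∧ ((Sum.inl q, i), (x, i + 1)) ∈ edges) ∧
      (∀ u : UVert V Q, ((Sum.inl q, i), u) ∈ edges → u.2 = i + 1 ∧ u.1 ∈ X)
  minimal : ∀ v ∈ verts,
    Relation.ReflTransGen (fun a b => (a, b) ∈ edges) (Sum.inl A.init, 0) v

/-- Edge relation of a universal unfolding. -/
def UnivUnfolding.edgeRel {A : ABA V Q} (U : UnivUnfolding A) (a b : UVert V Q) : Prop :=
  (a, b) ∈ U.edges

/-- The universal syntactic condition for `p`: no universal unfolding contains both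
`(p, i)` and `(¬p, i)` for any timestep `i`. -/
def UnivSyntacticCond (A : ABA V Q) (p : V) : Prop :=
  ∀ U : UnivUnfolding A, ∀ i : ℕ,
    ¬ ((Sum.inr (p, true), i) ∈ U.verts ∧ (Sum.inr (p, false), i) ∈ U.verts)

/-- `q` and `q'` are existentially in conflict for `p`. -/
def ExConflict (A : ABA V Q) (p : V) (q q' : Q) : Prop :=
  ∃ U : ExUnfolding A, ∃ i : ℕ,
    (Sum.inl q, i) ∈ U.verts ∧ (Sum.inl q', i) ∈ U.verts ∧
    ∃ i' : ℕ,
      Relation.ReflTransGen U.edgeRel (Sum.inl q, i) (Sum.inr (p, true), i') ∧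
      Relation.ReflTransGen U.edgeRel (Sum.inl q', i) (Sum.inr (p, false), i')

/-- `q` and `q'` are universally in conflict for `p`. -/
def UnivConflict (A : ABA V Q) (p : V) (q q' : Q) : Prop :=
  ∃ U : UnivUnfolding A, ∃ i : ℕ,
    (Sum.inl q, i) ∈ U.verts ∧ (Sum.inl q', i) ∈ U.verts ∧
    ∃ i' : ℕ,
      Relation.ReflTransGen U.edgeRel (Sum.inl q, i) (Sum.inr (p, true), i') ∧
      Relation.ReflTransGen U.edgeRel (Sum.inl q', i) (Sum.inr (p, false), i')

end ABAKC
namespace ABAKC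

variable {V Q : Type}

/-! ### Conflict-detection automata -/

/-- Transition relation of the nondeterministic safety automaton deciding existential
conflict of `q` and `q'`: from `(q1, q2, b)` to `(q1', q2', b')` whenever
`b' = b ∨ (q1 = q ∧ q2 = q')` and there is a set `X` containing `q1'` and `q2'` that is a
minimal satisfying assignment of both `δ(q1)` and `δ(q2)`. -/
def exConfStep (A : ABA V Q) (q q' : Q) (s s' : Q × Q × Bool) : Prop :=
  (s'.2.2 = true ↔ (s.2.2 = true ∨ (s.1 = q ∧ s.2.1 = q'))) ∧
  ∃ X : Set (Q ⊕ Lit V), Sum.inl s'.1 ∈ X ∧ Sum.inl s'.2.1 ∈ X ∧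
    X ∈ (A.tr s.1).mSat ∧ X ∈ (A.tr s.2.1).mSat

/-- Nonemptiness of the existential-conflict automaton: some finite run from
`(q0, q0, false)` reaches, with flag `true`, an accepting target `(p, ¬p, true)` or
`(¬p, p, true)`, i.e., a common minimal satisfying assignment containing both
`p`-literals. -/
def exConfAutNonempty (A : ABA V Q) (q q' : Q) (p : V) : Prop :=
  ∃ (n : ℕ) (σ : ℕ → Q × Q × Bool),
    σ 0 = (A.init, A.init, false) ∧
    (∀ k < n, exConfStep A q q' (σ k) (σ (k + 1))) ∧
    ((σ n).2.2 = true ∨ ((σ n).1 = q ∧ (σ n).2.1 = q')) ∧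
    ∃ X : Set (Q ⊕ Lit V),
      X ∈ (A.tr (σ n).1).mSat ∧ X ∈ (A.tr (σ n).2.1).mSat ∧
      Sum.inr (p, true) ∈ X ∧ Sum.inr (p, false) ∈ X

/-- Transition relation of the nondeterministic safety automaton deciding universal
conflict of `q` and `q'`: as in the existential case, but `q1'` and `q2'` may come from
two different minimal satisfying assignments `X` and `X'`. -/
def univConfStep (A : ABA V Q) (q q' : Q) (s s' : Q × Q × Bool) : Prop :=
  (s'.2.2 = true ↔ (s.2.2 = true ∨ (s.1 = q ∧ s.2.1 = q'))) ∧
  ∃ X X' : Set (Q ⊕ Lit V), Sum.inl s'.1 ∈ X ∧ Sum.inl s'.2.1 ∈ X' ∧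
    X ∈ (A.tr s.1).mSat ∧ X' ∈ (A.tr s.2.1).mSat

/-- Nonemptiness of the universal-conflict automaton. -/
def univConfAutNonempty (A : ABA V Q) (q q' : Q) (p : V) : Prop :=
  ∃ (n : ℕ) (σ : ℕ → Q × Q × Bool),
    σ 0 = (A.init, A.init, false) ∧
    (∀ k < n, univConfStep A q q' (σ k) (σ (k + 1))) ∧
    ((σ n).2.2 = true ∨ ((σ n).1 = q ∧ (σ n).2.1 = q')) ∧
    ∃ X X' : Set (Q ⊕ Lit V),
      X ∈ (A.tr (σ n).1).mSat ∧ X' ∈ (A.tr (σ n).2.1).mSat ∧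
      ((Sum.inr (p, true) ∈ X ∧ Sum.inr (p, false) ∈ X') ∨
       (Sum.inr (p, false) ∈ X ∧ Sum.inr (p, true) ∈ X'))

/-! ### Compilation constructions -/

/-- Macro-states: subsets of the conflict set `M`. -/
abbrev MacroState [DecidableEq Q] (M : Finset Q) := {X : Finset Q // X ⊆ M}

/-- State space of the compiled automata: `2^M ∪ (Q ∖ M)`. -/
abbrev CompState [DecidableEq Q] (M : Finset Q) := MacroState M ⊕ {a : Q // a ∉ M}

/-- The substitution `δ(q)[X'↦1, M∖X'↦0]`, re-targeting the remaining state variables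
(which lie outside `M`) to the compiled state space. -/
def compSubst [DecidableEq Q] (M X' : Finset Q) (B : PosBool (Q ⊕ Lit V)) :
    PosBool (CompState M ⊕ Lit V) :=
  B.bind fun x =>
    match x with
    | Sum.inl s =>
        if s ∈ X' then PosBool.tt
        else if h : s ∈ M then PosBool.ff
        else PosBool.var (Sum.inl (Sum.inr ⟨s, h⟩))
    | Sum.inr l => PosBool.var (Sum.inr l)

/-- The macro-state variable corresponding to `X' ⊆ M`. -/
def macroVar [DecidableEq Q] (M : Finset Q) (X' : {Y : Finset Q // Y ∈ M.powerset}) :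
    PosBool (CompState M ⊕ Lit V) :=
  PosBool.var (Sum.inl (Sum.inl ⟨X'.1, Finset.mem_powerset.mp X'.2⟩))

/-- The existential compilation of `A` with respect to `M ⊆ Q`: a safety automaton with
states `2^M ∪ (Q∖M)`, `δ'(q) = ⋁_{X'⊆M} (X' ∧ δ(q)[X'↦1, M∖X'↦0])` for `q ∈ Q∖M`, and
`δ'(X) = ⋁_{X'⊆M} (X' ∧ ⋀_{q∈X} δ(q)[X'↦1, M∖X'↦0])` for macro-states `X ⊆ M`. -/
noncomputable def exCompile [DecidableEq Q] (A : ABA V Q) (M : Finset Q) : ABA V (CompState M) where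
  init :=
    if h : A.init ∈ M then Sum.inl ⟨{A.init}, Finset.singleton_subset_iff.mpr h⟩
    else Sum.inr ⟨A.init, h⟩
  tr := fun s =>
    bigOr (M.powerset.attach.toList.map fun X' =>
      PosBool.and (macroVar M X')
        (match s with
          | Sum.inr a => compSubst M X'.1 (A.tr a.1)
          | Sum.inl X => bigAnd (X.1.toList.map fun b => compSubst M X'.1 (A.tr b))))
  acc := Set.univ

/-- The universal compilation of `A` with respect to `M ⊆ Q`: a safety automaton with
states `2^M ∪ (Q∖M)`, `δ'(q) = ⋀_{X'⊆M} (X' ∧ δ(q)[X'↦1, M∖X'↦0])` for `q ∈ Q∖M`, and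
`δ'(X) = ⋀_{X'⊆M} (X' ∧ ⋁_{q∈X} δ(q)[X'↦1, M∖X'↦0])` for macro-states `X ⊆ M`. -/
noncomputable def univCompile [DecidableEq Q] (A : ABA V Q) (M : Finset Q) : ABA V (CompState M) where
  init :=
    if h : A.init ∈ M then Sum.inl ⟨{A.init}, Finset.singleton_subset_iff.mpr h⟩
    else Sum.inr ⟨A.init, h⟩
  tr := fun s =>
    bigAnd (M.powerset.attach.toList.map fun X' =>
      PosBool.and (macroVar M X')
        (match s with
          | Sum.inr a => compSubst M X'.1 (A.tr a.1)
          | Sum.inl X => bigOr (X.1.toList.map fun b => compSubst M X'.1 (A.tr b))))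
  acc := Set.univ

/-- `M` over-approximates the states existentially in conflict for `p`:
every state in an existential conflict lies in `M`. -/
def ExOverApprox (A : ABA V Q) (p : V) (M : Finset Q) : Prop :=
  ∀ q q' : Q, ExConflict A p q q' → q ∈ M ∧ q' ∈ M

/-- `M` over-approximates the states universally in conflict for `p`. -/
def UnivOverApprox (A : ABA V Q) (p : V) (M : Finset Q) : Prop :=
  ∀ q q' : Q, UnivConflict A p q q' → q ∈ M ∧ q' ∈ M

/-- A run whose state-labeled nodes have children labels forming a *minimal* satisfying
assignment of the transition formula. -/
structure MinRun (A : ABA V Q) (w : Word V) extends Run A w where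
  min_step : ∀ n ∈ nodes, ∀ q : Q, label n = Sum.inl q →
    {x | ∃ d : ℕ, n ++ [d] ∈ nodes ∧ label (n ++ [d]) = x} ∈ (A.tr q).mSat

/-! ### Fixpoint labelings -/

/-- `post(q)`: the state parts of the minimal satisfying assignments of `δ(q)`. -/
def statePost (A : ABA V Q) (q : Q) : Set (Set Q) :=
  {Y | ∃ X ∈ (A.tr q).mSat, Y = {s : Q | Sum.inl s ∈ X}}

/-- The `p`-literals appearing in some minimal satisfying assignment of `δ(q)`,
i.e., `l(q) ∩ L_{p}`. -/
def pLits (A : ABA V Q) (p : V) (q : Q) : Set (Lit V) :=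
  {l | l.1 = p ∧ ∃ X ∈ (A.tr q).mSat, Sum.inr l ∈ X}

/-- One step of the successor relation on states induced by `post`. -/
def stepRel (A : ABA V Q) (a b : Q) : Prop := ∃ X ∈ statePost A a, b ∈ X

/-- Reachability between states along `post`. -/
def stateReach (A : ABA V Q) (a b : Q) : Prop := Relation.ReflTransGen (stepRel A) a b

/-- The labeling of the existential conflict fixpoint algorithm:
`l[q,0] = { l(q) ∩ L_{p} }` and
`l[q,i] = ⋃_{X ∈ post(q)} { ⋃_{q'∈X} ⋃_{u ∈ l[q',i−1]} u }`. -/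
def exLabel (A : ABA V Q) (p : V) : ℕ → Q → Set (Set (Lit V))
  | 0, q => {pLits A p q}
  | i + 1, q => {S | ∃ X ∈ statePost A q, S = ⋃ q' ∈ X, ⋃ u ∈ exLabel A p i q', u}

/-- The labeling of the universal conflict fixpoint algorithm:
`l[q,0] = { l(q) ∩ L_{p} }` and
`l[q,i] = { ⋃_{X ∈ post(q)} ⋃_{q'∈X} ⋃_{u ∈ l[q',i−1]} u }`. -/
def univLabel (A : ABA V Q) (p : V) : ℕ → Q → Set (Set (Lit V))
  | 0, q => {pLits A p q}
  | i + 1, q => {⋃ X ∈ statePost A q, ⋃ q' ∈ X, ⋃ u ∈ univLabel A p i q', u}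

/-- The conflict set returned by the existential fixpoint algorithm: all states added
(at some iteration) because two conjunctive successors `q', q''` in a common
`X ∈ post(q)` carried different labels, together with everything they reach. -/
def exConfs (A : ABA V Q) (p : V) : Set Q :=
  {s | ∃ i : ℕ, ∃ q : Q, ∃ X ∈ statePost A q, ∃ q' ∈ X, ∃ q'' ∈ X,
    exLabel A p i q' ≠ exLabel A p i q'' ∧
    (s = q' ∨ s = q'' ∨ stateReach A q' s ∨ stateReach A q'' s)}

/-- The conflict set returned by the universal fixpoint algorithm: all states added
(at some iteration) because two disjunctive successors `q' ∈ X`, `q'' ∈ X'` of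
distinct `X, X' ∈ post(q)` carried different labels, together with everything they
reach. -/
def univConfs (A : ABA V Q) (p : V) : Set Q :=
  {s | ∃ i : ℕ, ∃ q : Q, ∃ X ∈ statePost A q, ∃ X' ∈ statePost A q,
    ∃ q' ∈ X, ∃ q'' ∈ X',
    univLabel A p i q' ≠ univLabel A p i q'' ∧
    (s = q' ∨ s = q'' ∨ stateReach A q' s ∨ stateReach A q'' s)}

end ABAKC

namespace ABAKC

section Formulas

variable {α β : Type}

theorem PosBool.eval_mono (B : PosBool α) {X Y : Set α} (h : X ⊆ Y) (hX : B.eval X) :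
    B.eval Y := by
  induction B with
  | tt => trivial
  | ff => exact hX
  | var a => exact h hX
  | and f g hf hg => exact ⟨hf hX.1, hg hX.2⟩
  | or f g hf hg => exact hX.imp hf hg

theorem PosBool.eval_bind (B : PosBool α) (f : α → PosBool β) (S : Set β) :
    (B.bind f).eval S ↔ B.eval {x | (f x).eval S} := by
  induction B with
  | tt => exact Iff.rfl
  | ff => exact Iff.rfl
  | var a => exact Iff.rfl
  | and g h hg hh => exact and_congr hg hh
  | or g h hg hh => exact or_congr hg hh

theorem eval_bigOr (l : List (PosBool α)) (S : Set α) :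
    (bigOr l).eval S ↔ ∃ B ∈ l, B.eval S := by
  induction l with
  | nil => simp [bigOr, PosBool.eval]
  | cons b l ih => simp [bigOr, PosBool.eval, ih]

theorem eval_bigAnd (l : List (PosBool α)) (S : Set α) :
    (bigAnd l).eval S ↔ ∀ B ∈ l, B.eval S := by
  induction l with
  | nil => simp [bigAnd, PosBool.eval]
  | cons b l ih => simp [bigAnd, PosBool.eval, ih]

/-- Over finitely many variables, each satisfying assignment contains a minimal one. -/
theorem exists_mSat_subset [Finite α] (B : PosBool α) {X : Set α} (hX : B.eval X) :
    ∃ Y ∈ B.mSat, Y ⊆ X := by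
  obtain ⟨Y, hYX, hY⟩ := (Set.toFinite {Y : Set α | B.eval Y}).exists_le_minimal hX
  refine ⟨Y, ⟨hY.prop, fun Z hZ hev => ?_⟩, hYX⟩
  exact hZ.2 (hY.le_of_le hev hZ.1)

end Formulas

/-! ### Traces of safety automata -/

section Traces

variable {V Q : Type}

/-- The assignment making true the states in `S` and the literals in `L`. -/
def asg (S : Set Q) (L : Set (Lit V)) : Set (Q ⊕ Lit V) :=
  {x | Sum.elim (· ∈ S) (· ∈ L) x}

theorem asg_mono {S S' : Set Q} {L L' : Set (Lit V)} (hS : S ⊆ S') (hL : L ⊆ L') :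
    asg S L ⊆ asg S' L' := by
  rintro (s | l) h
  · exact hS h
  · exact hL h

/-- The literals holding in a letter. -/
def trueLits (σ : Set V) : Set (Lit V) := {l | litHolds σ l}

/-- `R i` contains the states active at time `i`: a run, disregarding acceptance, in which
equal states at the same depth are identified. -/
def IsTrace (A : ABA V Q) (w : Word V) (R : ℕ → Set Q) : Prop :=
  A.init ∈ R 0 ∧ ∀ i, ∀ q ∈ R i, (A.tr q).eval (asg (R (i + 1)) (trueLits (w i)))

theorem IsTrace.of_run {A : ABA V Q} {w : Word V} (ρ : Run A w) :
    ∃ R, IsTrace A w R := by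
  refine ⟨fun i => {q | ∃ n ∈ ρ.nodes, n.length = i ∧ ρ.label n = Sum.inl q},
    ⟨[], ρ.root_mem, rfl, ρ.root_label⟩, ?_⟩
  rintro i q ⟨n, hn, rfl, hq⟩
  refine PosBool.eval_mono _ ?_ (ρ.step n hn q hq)
  rintro (s | l) ⟨d, hd, hl⟩
  · exact ⟨n ++ [d], hd, by simp, hl⟩
  · have := ρ.lit_ok _ hd l hl
    simpa [asg, trueLits] using this

/-- The run unfolding a trace: nodes are the sequences of codes of labels in which every element
codes a label that the trace allows at its depth, and only state nodes have children. -/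
theorem IsTrace.exists_run [Finite V] [Finite Q] {A : ABA V Q} (hA : A.Safety) {w : Word V}
    {R : ℕ → Set Q} (hR : IsTrace A w R) : w ∈ A.lang := by
  have : Nonempty (Q ⊕ Lit V) := ⟨Sum.inl A.init⟩
  obtain ⟨g, hg⟩ := exists_surjective_nat (Q ⊕ Lit V)
  let label : List ℕ → Q ⊕ Lit V := fun n =>
    match n.getLast? with
    | none => Sum.inl A.init
    | some d => g d
  have label_snoc : ∀ m d, label (m ++ [d]) = g d := by intro m d; simp [label]
  let nodes : Set (List ℕ) := {n | ∀ m d, m ++ [d] <+: n →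
    (∃ q, label m = Sum.inl q) ∧ g d ∈ asg (R (m.length + 1)) (trueLits (w m.length))}
  refine ⟨{ nodes := nodes, label := label, root_mem := ?_, prefix_closed := ?_, root_label := rfl,
            step := ?_, lit_ok := ?_ }, ?_⟩
  · intro m d h
    simp at h
  · intro m n hn hmn m' d h
    exact hn m' d (h.trans hmn)
  · intro n hn q hq
    have hqR : q ∈ R n.length := by
      rcases List.eq_nil_or_concat' n with rfl | ⟨m, d, rfl⟩
      · have : A.init = q := Sum.inl.inj hq
        exact this ▸ hR.1
      · have h := (hn m d List.prefix_rfl).2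
        rw [label_snoc] at hq
        rw [hq] at h
        simpa [asg] using h
    refine PosBool.eval_mono _ ?_ (hR.2 _ q hqR)
    intro x hx
    obtain ⟨d, rfl⟩ := hg x
    refine ⟨d, ?_, label_snoc n d⟩
    intro m e hme
    rcases List.prefix_concat_iff.1 hme with h | h
    · obtain ⟨rfl, h2⟩ := List.append_inj' h rfl
      obtain rfl : e = d := by simpa using h2
      exact ⟨⟨q, hq⟩, hx⟩
    · exact hn m e h
  · intro n hn l hl
    rcases List.eq_nil_or_concat' n with rfl | ⟨m, d, rfl⟩
    · cases hl
    · have h := (hn m d List.prefix_rfl).2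
      rw [label_snoc] at hl
      rw [hl] at h
      simpa [asg, trueLits] using h
  · intro b hb k
    have h := hb (k + 1)
    rw [List.ofFn_succ', List.concat_eq_append] at h
    obtain ⟨⟨q, hq⟩, -⟩ := h _ _ List.prefix_rfl
    refine ⟨k, le_rfl, q, ?_, hq⟩
    rw [hA]
    trivial

theorem mem_lang_iff [Finite V] [Finite Q] {A : ABA V Q} (hA : A.Safety) {w : Word V} :
    w ∈ A.lang ↔ ∃ R, IsTrace A w R :=
  ⟨fun ⟨ρ, _⟩ => IsTrace.of_run ρ, fun ⟨_, hR⟩ => hR.exists_run hA⟩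

end Traces

/-! ### Semantics of the constructions -/

section Semantics

variable {V Q : Type}

/-- The set of literals `L` with its `p`-literals replaced by the literal giving `p` value `b`. -/
def setLit [DecidableEq V] (p : V) (b : Bool) (L : Set (Lit V)) : Set (Lit V) :=
  {l | if l.1 = p then l.2 = b else l ∈ L}

theorem eval_substP [DecidableEq V] (p : V) (b : Bool) (B : PosBool (Q ⊕ Lit V)) (S : Set Q)
    (L : Set (Lit V)) :
    (substP p b B).eval (asg S L) ↔ B.eval (asg S (setLit p b L)) := by
  rw [substP, PosBool.eval_bind]
  apply iff_of_eq
  congr 1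
  ext (s | ⟨a, c⟩)
  · exact Iff.rfl
  · by_cases h : a = p <;> by_cases h' : c = b <;>
      simp [asg, setLit, h, h', PosBool.eval]

theorem eval_sExists [DecidableEq V] (A : ABA V Q) (p : V) (q : Q) (S : Set Q)
    (L : Set (Lit V)) :
    ((A.sExists p).tr q).eval (asg S L) ↔
      ∃ b, (A.tr q).eval (asg S (setLit p b L)) := by
  simp only [ABA.sExists, PosBool.eval, eval_substP, Bool.exists_bool]
  exact or_comm

variable [DecidableEq Q]

/-- The states of `A` represented by a state of the compiled automaton. -/
def members {M : Finset Q} : CompState M → Set Q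
  | Sum.inl X => {q | q ∈ X.1}
  | Sum.inr a => {a.1}

/-- The states of `A` represented by a macro-state `X` and the non-macro states in `S`. -/
def comb {M : Finset Q} (X : MacroState M) (S : Set (CompState M)) : Set Q :=
  {s | s ∈ X.1 ∨ ∃ h : s ∉ M, (Sum.inr ⟨s, h⟩ : CompState M) ∈ S}

theorem eval_compSubst {M : Finset Q} (X : MacroState M) (B : PosBool (Q ⊕ Lit V))
    (S : Set (CompState M)) (L : Set (Lit V)) :
    (compSubst M X.1 B).eval (asg S L) ↔ B.eval (asg (comb X S) L) := by
  rw [compSubst, PosBool.eval_bind]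
  apply iff_of_eq
  congr 1
  ext (s | l)
  · by_cases h : s ∈ X.1
    · simp [asg, comb, h, PosBool.eval]
    · by_cases h' : s ∈ M <;> simp [asg, comb, h, h', PosBool.eval]
  · exact Iff.rfl

theorem eval_exCompile (A : ABA V Q) (M : Finset Q) (s : CompState M) (S : Set (CompState M))
    (L : Set (Lit V)) :
    ((exCompile A M).tr s).eval (asg S L) ↔ ∃ X : MacroState M, Sum.inl X ∈ S ∧
      ∀ q ∈ members s, (A.tr q).eval (asg (comb X S) L) := by
  have key : ∀ X : MacroState M,
      (match s with
        | Sum.inr a => compSubst M X.1 (A.tr a.1)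
        | Sum.inl Y => bigAnd (Y.1.toList.map fun b => compSubst M X.1 (A.tr b))).eval
          (asg S L) ↔ ∀ q ∈ members s, (A.tr q).eval (asg (comb X S) L) := by
    intro X
    rcases s with Y | a
    · simp [eval_bigAnd, eval_compSubst, members]
    · simp [eval_compSubst, members]
  simp only [exCompile, eval_bigOr, List.mem_map, Finset.mem_toList, Finset.mem_attach, true_and]
  constructor
  · rintro ⟨_, ⟨X, rfl⟩, h1, h2⟩
    exact ⟨⟨X.1, Finset.mem_powerset.mp X.2⟩, h1, (key ⟨X.1, Finset.mem_powerset.mp X.2⟩).1 h2⟩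
  · rintro ⟨X, h1, h2⟩
    exact ⟨_, ⟨⟨X.1, Finset.mem_powerset.mpr X.2⟩, rfl⟩, h1, (key X).2 h2⟩

theorem members_init (A : ABA V Q) (M : Finset Q) :
    members (exCompile A M).init = {A.init} := by
  by_cases h : A.init ∈ M
  · ext q; simp [exCompile, h, members]
  · simp [exCompile, h, members]

/-- The states of `A` represented by a set of states of the compiled automaton. -/
def flat {M : Finset Q} (S : Set (CompState M)) : Set Q := {q | ∃ s ∈ S, q ∈ members s}

theorem comb_subset_flat {M : Finset Q} {X : MacroState M} {S : Set (CompState M)}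
    (hX : Sum.inl X ∈ S) : comb X S ⊆ flat S := by
  rintro q (h | ⟨h, hS⟩)
  · exact ⟨_, hX, h⟩
  · exact ⟨_, hS, rfl⟩

theorem exCompile_lang [Finite V] [Finite Q] (A : ABA V Q) (hA : A.Safety) (M : Finset Q) :
    (exCompile A M).lang = A.lang := by
  ext w
  rw [mem_lang_iff hA, mem_lang_iff (A := exCompile A M) rfl]
  constructor
  · rintro ⟨R, h0, hR⟩
    refine ⟨fun i => flat (R i), ⟨_, h0, by simp [members_init]⟩, ?_⟩
    rintro i q ⟨s, hs, hq⟩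
    obtain ⟨X, hX, h⟩ := (eval_exCompile A M s _ _).1 (hR i s hs)
    exact PosBool.eval_mono _ (asg_mono (comb_subset_flat hX) subset_rfl) (h q hq)
  · rintro ⟨R, h0, hR⟩
    -- All subsets of `R i ∩ M` are admitted: at time `0` the macro-state `{q0}` is needed.
    refine ⟨fun i => {s | members s ⊆ R i}, ?_, ?_⟩
    · simpa [members_init] using h0
    · intro i s hs
      classical
      rw [eval_exCompile]
      refine ⟨⟨M.filter (· ∈ R (i + 1)), Finset.filter_subset _ _⟩, ?_, ?_⟩
      · intro q hq
        exact (Finset.mem_filter.1 hq).2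
      · intro q hq
        refine PosBool.eval_mono _ (asg_mono ?_ subset_rfl) (hR i q (hs hq))
        intro r hr
        by_cases h : r ∈ M
        · exact Or.inl (Finset.mem_filter.2 ⟨h, hr⟩)
        · exact Or.inr ⟨h, by simpa [members] using hr⟩

end Semantics

/-! ### Existential unfoldings -/

section Unfoldings

variable {V Q : Type}

/-- The unfolding in which the state `q` at time `i` uses the minimal satisfying assignment
`Y i q`. Only the states in `R i` can be reached, so only these need a choice. -/
theorem exists_unfolding (A : ABA V Q) (R : ℕ → Set Q) (Y : ℕ → Q → Set (Q ⊕ Lit V))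
    (h0 : A.init ∈ R 0) (hY : ∀ i, ∀ q ∈ R i, Y i q ∈ (A.tr q).mSat)
    (hR : ∀ i, ∀ q ∈ R i, ∀ s, Sum.inl s ∈ Y i q → s ∈ R (i + 1)) :
    ∃ U : ExUnfolding A,
      (∀ q i, (Sum.inl q, i) ∈ U.verts → q ∈ R i ∧ ∀ x ∈ Y i q, (x, i + 1) ∈ U.verts) ∧
      ∀ q i u, ((Sum.inl q, i), u) ∈ U.edges → u.2 = i + 1 ∧ u.1 ∈ Y i q := by
  let E : UVert V Q → UVert V Q → Prop := fun a b =>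
    ∃ q, a.1 = Sum.inl q ∧ b.2 = a.2 + 1 ∧ b.1 ∈ Y a.2 q
  let verts : Set (UVert V Q) := {v | Relation.ReflTransGen E (Sum.inl A.init, 0) v}
  have inv : ∀ v ∈ verts, ∀ q, v.1 = Sum.inl q → q ∈ R v.2 := by
    intro v hv
    induction hv with
    | refl =>
      intro q hq
      obtain rfl : A.init = q := Sum.inl.inj hq
      exact h0
    | tail _ hE ih =>
      obtain ⟨q, hq, h2, hmem⟩ := hE
      intro s hs
      rw [hs] at hmem
      rw [h2]
      exact hR _ q (ih q hq) s hmem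
  refine ⟨{ verts := verts
            edges := {e | e.1 ∈ verts ∧ E e.1 e.2}
            root_mem := Relation.ReflTransGen.refl
            edges_sub := fun e he => ⟨he.1, Relation.ReflTransGen.tail he.1 he.2⟩
            edge_shape := ?_
            succ := ?_
            minimal := ?_ }, ?_, ?_⟩
  · rintro e ⟨-, q, hq, h2, -⟩
    exact ⟨⟨q, hq⟩, h2⟩
  · intro q i hv
    refine ⟨Y i q, hY i q (inv _ hv q rfl), ?_, ?_⟩
    · intro x hx
      have hE : E (Sum.inl q, i) (x, i + 1) := ⟨q, rfl, rfl, hx⟩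
      exact ⟨Relation.ReflTransGen.tail hv hE, hv, hE⟩
    · rintro u ⟨-, r, hr, h2, hmem⟩
      obtain rfl : q = r := Sum.inl.inj hr
      exact ⟨h2, hmem⟩
  · intro v hv
    induction hv with
    | refl => exact Relation.ReflTransGen.refl
    | tail h1 hE ih => exact ih.tail ⟨h1, hE⟩
  · intro q i hv
    refine ⟨inv _ hv q rfl, fun x hx => ?_⟩
    exact Relation.ReflTransGen.tail hv ⟨q, rfl, rfl, hx⟩
  · rintro q i u ⟨-, r, hr, h2, hmem⟩
    obtain rfl : q = r := Sum.inl.inj hr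
    exact ⟨h2, hmem⟩

/-- A vertex at time `j` has an ancestor at each time `k ≤ j`. -/
theorem ExUnfolding.exists_ancestor {A : ABA V Q} (U : ExUnfolding A) {v : UVert V Q}
    (hv : v ∈ U.verts) {k : ℕ} (hk : k ≤ v.2) :
    ∃ u ∈ U.verts, u.2 = k ∧ Relation.ReflTransGen U.edgeRel u v := by
  have h := U.minimal v hv
  induction h with
  | refl => exact ⟨_, hv, (Nat.le_zero.1 hk).symm, .refl⟩
  | @tail a b _ hE ih =>
    obtain ⟨ha, hb⟩ := U.edges_sub _ hE
    rcases Nat.lt_or_ge k b.2 with hlt | hge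
    · have h2 : b.2 = a.2 + 1 := (U.edge_shape _ hE).2
      obtain ⟨u, hu, huk, hua⟩ := ih ha (by omega)
      exact ⟨u, hu, huk, hua.tail hE⟩
    · exact ⟨b, hb, le_antisymm hge hk, .refl⟩

theorem ExUnfolding.level_le {A : ABA V Q} (U : ExUnfolding A) {u v : UVert V Q}
    (h : Relation.ReflTransGen U.edgeRel u v) : u.2 ≤ v.2 := by
  induction h with
  | refl => exact le_rfl
  | tail _ hE ih =>
    have := (U.edge_shape _ hE).2
    simp only at this
    omega

theorem ExUnfolding.state_of_reach_lt {A : ABA V Q} (U : ExUnfolding A) {u v : UVert V Q}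
    (h : Relation.ReflTransGen U.edgeRel u v) (hlt : u.2 < v.2) : ∃ q, u.1 = Sum.inl q := by
  rcases Relation.ReflTransGen.cases_head h with rfl | ⟨_, hE, _⟩
  · exact absurd hlt (lt_irrefl _)
  · exact (U.edge_shape _ hE).1

theorem ExUnfolding.mem_verts_of_reach {A : ABA V Q} (U : ExUnfolding A) {u v : UVert V Q}
    (h : Relation.ReflTransGen U.edgeRel u v) (hu : u ∈ U.verts) : v ∈ U.verts := by
  rcases Relation.ReflTransGen.cases_tail h with rfl | ⟨_, _, hE⟩
  · exact hu
  · exact (U.edges_sub _ hE).2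

/-- If both `p` and `¬p` occur at time `i`, all states reaching one of them lie in `M`. -/
theorem ExUnfolding.mem_of_clash {A : ABA V Q} {p : V} {M : Finset Q} (hM : ExOverApprox A p M)
    (U : ExUnfolding A) {i : ℕ} (hcl : ∀ b, (Sum.inr (p, b), i) ∈ U.verts) {q : Q} {k : ℕ}
    {b : Bool} (hq : (Sum.inl q, k) ∈ U.verts)
    (hr : Relation.ReflTransGen U.edgeRel (Sum.inl q, k) (Sum.inr (p, b), i)) : q ∈ M := by
  have hlt : k < i := by
    rcases Relation.ReflTransGen.cases_head hr with h | ⟨c, hE, h⟩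
    · cases h
    · have h1 := (U.edge_shape _ hE).2
      have h2 := U.level_le h
      simp only at h1 h2
      omega
  obtain ⟨⟨x, k'⟩, hu, rfl, hur⟩ := U.exists_ancestor (hcl (!b)) (k := k) hlt.le
  obtain ⟨q', rfl : x = Sum.inl q'⟩ := U.state_of_reach_lt hur hlt
  cases b
  · exact (hM q' q ⟨U, k', hu, hq, i, hur, hr⟩).2
  · exact (hM q q' ⟨U, k', hq, hu, i, hr, hur⟩).1

end Unfoldings

/-! ### Existential normal form -/

section NormalForm

variable {V Q : Type}

theorem existsLang_subset [Finite V] [Finite Q] [DecidableEq V] {A : ABA V Q} (hA : A.Safety)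
    (p : V) : A.existsLang p ⊆ (A.sExists p).langWithout p := by
  classical
  rintro _ ⟨t, ht, rfl⟩
  refine ⟨?_, fun i => by simp [projWord]⟩
  obtain ⟨R, h0, hR⟩ := (mem_lang_iff hA).1 ht
  refine (mem_lang_iff (A := A.sExists p) hA).2 ⟨R, h0, fun i q hq => ?_⟩
  refine (eval_sExists A p q _ _).2 ⟨decide (p ∈ t i), ?_⟩
  refine PosBool.eval_mono _ (asg_mono subset_rfl ?_) (hR i q hq)
  rintro ⟨a, c⟩ hl
  by_cases h : a = p
  · subst h
    by_cases hp : a ∈ t i <;> cases c <;> simp_all [setLit, trueLits, litHolds]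
  · simpa [setLit, trueLits, litHolds, projWord, h] using hl

/-- The inclusion that uses the hypothesis on `M`. -/
theorem langWithout_subset [Finite V] [Finite Q] [DecidableEq V] [DecidableEq Q] {A : ABA V Q}
    (hA : A.Safety) {p : V} {M : Finset Q} (hM : ExOverApprox A p M) :
    ((exCompile A M).sExists p).langWithout p ⊆ (exCompile A M).existsLang p := by
  classical
  rintro w ⟨hw, hp⟩
  obtain ⟨R', h0, hR'⟩ := (mem_lang_iff (A := (exCompile A M).sExists p) rfl).1 hw
  -- `bb i s` and `nx i s` are the value of `p` and the macro-state chosen by `s` at time `i`.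
  have hch : ∀ i s, ∃ (b : Bool) (X : MacroState M), s ∈ R' i → Sum.inl X ∈ R' (i + 1) ∧
      ∀ q ∈ members s,
        (A.tr q).eval (asg (comb X (R' (i + 1))) (setLit p b (trueLits (w i)))) := by
    intro i s
    by_cases hs : s ∈ R' i
    · obtain ⟨b, hb⟩ := (eval_sExists _ p s _ _).1 (hR' i s hs)
      obtain ⟨X, hX, h⟩ := (eval_exCompile A M s _ _).1 hb
      exact ⟨b, X, fun _ => ⟨hX, h⟩⟩
    · exact ⟨true, ⟨∅, Finset.empty_subset _⟩, fun h => absurd h hs⟩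
  choose bb nx hnx using hch
  -- The main chain.
  let c : ℕ → CompState M := fun n =>
    Nat.rec (exCompile A M).init (fun k s => Sum.inl (nx k s)) n
  have hc : ∀ k, c k ∈ R' k := by
    intro k
    induction k with
    | zero => exact h0
    | succ k ih => exact (hnx k _ ih).1
  have hor : ∀ i q, ∃ s, (q ∈ flat (R' i) → s ∈ R' i ∧ q ∈ members s) ∧
      (q ∈ members (c i) → s = c i) := by
    intro i q
    by_cases h : q ∈ members (c i)
    · exact ⟨c i, fun _ => ⟨hc i, h⟩, fun _ => rfl⟩
    · by_cases h' : q ∈ flat (R' i)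
      · obtain ⟨s, hs⟩ := h'
        exact ⟨s, fun _ => hs, fun h'' => absurd h'' h⟩
      · exact ⟨c i, fun h'' => absurd h'' h', fun _ => rfl⟩
  choose o ho ho' using hor
  have hYex : ∀ i q, ∃ Y : Set (Q ⊕ Lit V), q ∈ flat (R' i) → Y ∈ (A.tr q).mSat ∧
      Y ⊆ asg (comb (nx i (o i q)) (R' (i + 1))) (setLit p (bb i (o i q)) (trueLits (w i))) := by
    intro i q
    by_cases h : q ∈ flat (R' i)
    · obtain ⟨hs, hq⟩ := ho i q h
      obtain ⟨Y, hY⟩ := exists_mSat_subset _ ((hnx i _ hs).2 q hq)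
      exact ⟨Y, fun _ => hY⟩
    · exact ⟨∅, fun h' => absurd h' h⟩
  choose Y hY using hYex
  have hinit : A.init ∈ flat (R' 0) :=
    ⟨(exCompile A M).init, h0, by rw [members_init]; rfl⟩
  obtain ⟨U, hUv, hUe⟩ := exists_unfolding A (fun i => flat (R' i)) Y hinit
    (fun i q hq => (hY i q hq).1)
    (fun i q hq s hs => comb_subset_flat (hnx i _ (ho i q hq).1).1 ((hY i q hq).2 hs))
  have hcons : ∀ i, ¬ ∀ b, (Sum.inr (p, b), i) ∈ U.verts := by
    intro i hcl
    -- Ancestors of the two clashing literals belong to the main chain.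
    have hchain : ∀ b v, Relation.ReflTransGen (fun a b => (a, b) ∈ U.edges)
        (Sum.inl A.init, 0) v → Relation.ReflTransGen U.edgeRel v (Sum.inr (p, b), i) →
        ∀ q, v.1 = Sum.inl q → q ∈ members (c v.2) := by
      intro b v hv
      induction hv with
      | refl =>
        intro _ q hq
        obtain rfl : A.init = q := Sum.inl.inj hq
        change A.init ∈ members (exCompile A M).init
        rw [members_init]
        rfl
      | @tail a v _ hE ih =>
        intro hr q hq
        obtain ⟨v1, v2⟩ := v
        obtain ⟨a1, k⟩ := a
        obtain ⟨⟨r, rfl : a1 = Sum.inl r⟩, rfl : v2 = k + 1⟩ := U.edge_shape _ hE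
        obtain rfl : v1 = Sum.inl q := hq
        have hrc : r ∈ members (c k) := ih (.head hE hr) r rfl
        have hqM : q ∈ M := U.mem_of_clash hM hcl (U.edges_sub _ hE).2 hr
        have hqY := (hY k r (hUv r k (U.edges_sub _ hE).1).1).2 (hUe r k _ hE).2
        rw [ho' k r hrc] at hqY
        rcases hqY with h | ⟨h, -⟩
        · exact h
        · exact absurd hqM h
    have hval : ∀ b, ∃ k, i = k + 1 ∧ bb k (c k) = b := by
      intro b
      have hm := U.minimal _ (hcl b)
      rcases Relation.ReflTransGen.cases_tail hm with h | ⟨⟨a1, k⟩, ha, hE⟩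
      · cases h
      obtain ⟨⟨r, rfl : a1 = Sum.inl r⟩, hi : i = k + 1⟩ := U.edge_shape _ hE
      have hrc : r ∈ members (c k) := hchain b _ ha (.single hE) r rfl
      have hbY := (hY k r (hUv r k (U.edges_sub _ hE).1).1).2 (hUe r k _ hE).2
      rw [ho' k r hrc] at hbY
      have : b = bb k (c k) := by simpa [asg, setLit] using hbY
      exact ⟨k, hi, this.symm⟩
    obtain ⟨k, hk, hkt⟩ := hval true
    obtain ⟨k', hk', hkf⟩ := hval false
    obtain rfl : k = k' := by omega
    rw [hkt] at hkf
    cases hkf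
  -- The word extending `w` by the values of `p` that `U` prescribes.
  let t : Word V := fun i => w i ∪ {a | a = p ∧ (Sum.inr (p, true), i + 1) ∈ U.verts}
  have htw : projWord p t = w := by
    funext i
    ext a
    by_cases h : a = p
    · subst h; simp [projWord, hp i]
    · simp [projWord, t, h]
  refine ⟨t, ?_, htw⟩
  rw [exCompile_lang A hA, mem_lang_iff hA]
  refine ⟨fun i => {q | (Sum.inl q, i) ∈ U.verts}, U.root_mem, fun i q hq => ?_⟩
  obtain ⟨hqR, hsucc⟩ := hUv q i hq
  refine PosBool.eval_mono _ ?_ (hY i q hqR).1.1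
  rintro (s | ⟨a, b⟩) hx
  · exact hsucc _ hx
  · have hv := hsucc _ hx
    have hx' := (hY i q hqR).2 hx
    change a ∈ t i ↔ b = true
    by_cases h : a = p
    · subst h
      have hta : a ∈ t i ↔ (Sum.inr (a, true), i + 1) ∈ U.verts := by simp [t, hp i]
      rw [hta]
      cases b
      · refine iff_of_false (fun h' => hcons (i + 1) ?_) (by simp)
        rintro (_ | _)
        · exact hv
        · exact h'
      · exact iff_of_true hv rfl
    · simpa [asg, setLit, h, trueLits, litHolds, t] using hx'

end NormalForm

/-- The existential compilation of an alternating safety automaton `A` with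
respect to an over-approximation `M` of its existential conflicts for `p` has at most
`2^|M| + |Q∖M|` states, is language-equivalent to `A`, and is in existential normal form
for `p`. -/
theorem exCompile_correct {V Q : Type} [Fintype V] [Fintype Q] [DecidableEq V]
    [DecidableEq Q] (A : ABA V Q) (hSafe : A.Safety) (p : V) (M : Finset Q)
    (hM : ExOverApprox A p M) :
    Fintype.card (CompState M) ≤ 2 ^ M.card + (Finset.univ \ M).card ∧
    (exCompile A M).lang = A.lang ∧
    ExistentialNF (exCompile A M) p := by
  refine ⟨?_, exCompile_lang A hSafe M, ?_⟩
  · rw [Fintype.card_sum, Fintype.card_of_subtype M.powerset (fun X => Finset.mem_powerset),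
      Finset.card_powerset, Fintype.card_of_subtype (Finset.univ \ M) (fun q => by simp)]
  · exact (langWithout_subset hSafe hM).antisymm
      (existsLang_subset (A := exCompile A M) rfl p)

end ABAKC
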